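/- arXiv:2512.17813 — 2 statements merged into one kernel-verified Lean document; each statement's English description precedes it below -/
import Mathlib

section
/- Let Ω ⊆ ℝⁿ be open, let a : [0,∞) → ℝ be C¹ with locally Lipschitz derivative, a(t) > 0 and (t·a(t))′ > 0 for all t ≥ 0, let f ∈ C¹(ℝ), and let u ∈ C³(Ω) be a weak solution of Δ_a u + f(u) = 0 in Ω. Then the Bochner-type inequality (1/2)·div(A(∇u)∇|∇u|²) ≥ Q holds weakly in Ω: for every nonnegative Lipschitz φ with compact support in Ω, −(1/2)∫_Ω ⟨A(∇u)∇(|∇u|²), ∇φ⟩ dx ≥ ∫_Ω φ·Q dx, where on {∇u ≠ 0}, writing ν := ∇u/|∇u|, u_{νν} := Hess u(ν,ν), ∇ᵀ|∇u| := ∇|∇u| − ⟨∇|∇u|, ν⟩ν and λ_i := λ_i(|∇u|), Q := λ₁·u_{νν}² + (λ₁+λ₂)·|∇ᵀ|∇u||² + λ₂·( ‖Hess u‖² − u_{νν}² − 2|∇ᵀ|∇u||² ) − f′(u)|∇u|², and Q := 0 on crit(u). (The quantity ‖Hess u‖² − u_{νν}² − 2|∇ᵀ|∇u||² equals |∇u|²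 times the squared norm of the second fundamental form of the level set of u, and is nonnegative.) -/
open MeasureTheory Set Metric Filter
open scoped RealInnerProductSpace Topology ENNReal

noncomputable section

variable {n : ℕ}

/-- The quasilinear operator matrix `A(p)` applied to a vector `v`:
`A(p)v = a(|p|) v + (a'(|p|)/|p|) ⟨p,v⟩ p` (with the second term vanishing at `p = 0`). -/
def Aop (a : ℝ → ℝ) (p v : EuclideanSpace ℝ (Fin n)) : EuclideanSpace ℝ (Fin n) :=
  a ‖p‖ • v + ((deriv a ‖p‖ / ‖p‖) * ⟪p, v⟫) • p

/-- `λ₁(t) = a(t) + t·a'(t) = (t a(t))'`. -/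
def lam1 (a : ℝ → ℝ) (t : ℝ) : ℝ := a t + t * deriv a t

/-- `λ₂(t) = a(t)`. -/
def lam2 (a : ℝ → ℝ) (t : ℝ) : ℝ := a t

/-- `λmax(t) = max{λ₁(t), λ₂(t)}`. -/
def lamMax (a : ℝ → ℝ) (t : ℝ) : ℝ := max (lam1 a t) (lam2 a t)

/-- A Lipschitz test function with compact support contained in `Ω`. -/
def IsTestOn (Ω : Set (EuclideanSpace ℝ (Fin n))) (φ : EuclideanSpace ℝ (Fin n) → ℝ) : Prop :=
  (∃ K, LipschitzWith K φ) ∧ HasCompactSupport φ ∧ tsupport φ ⊆ Ω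

/-- `u` is a weak solution of `div(a(|∇u|)∇u) + f(u) = 0` in `Ω`. -/
def IsWeakSolution (a f : ℝ → ℝ) (Ω : Set (EuclideanSpace ℝ (Fin n)))
    (u : EuclideanSpace ℝ (Fin n) → ℝ) : Prop :=
  ∀ φ : EuclideanSpace ℝ (Fin n) → ℝ, IsTestOn Ω φ →
    ∫ x in Ω, a ‖gradient u x‖ * ⟪gradient u x, gradient φ x⟫
      = ∫ x in Ω, f (u x) * φ x

/-- The stability inequality for a solution `u`. -/
def IsStable (a f : ℝ → ℝ) (Ω : Set (EuclideanSpace ℝ (Fin n)))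
    (u : EuclideanSpace ℝ (Fin n) → ℝ) : Prop :=
  ∀ φ : EuclideanSpace ℝ (Fin n) → ℝ, IsTestOn Ω φ →
    ∫ x in Ω, deriv f (u x) * φ x ^ 2
      ≤ ∫ x in Ω, ⟪Aop a (gradient u x) (gradient φ x), gradient φ x⟫

/-- `u` has moderate energy growth in `Ω₀`. -/
def ModerateEnergyGrowth (a : ℝ → ℝ) (u : EuclideanSpace ℝ (Fin n) → ℝ)
    (Ω₀ : Set (EuclideanSpace ℝ (Fin n))) : Prop :=
  ∃ φ : ℕ → EuclideanSpace ℝ (Fin n) → ℝ,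
    (∀ j, ∃ K, LipschitzWith K (φ j)) ∧
    (∀ j, HasCompactSupport (φ j)) ∧
    (∀ j x, 0 ≤ φ j x) ∧
    (∀ K : Set (EuclideanSpace ℝ (Fin n)), IsCompact K → K ⊆ closure Ω₀ →
      TendstoUniformlyOn (fun j => φ j) (fun _ => (1 : ℝ)) atTop K) ∧
    Tendsto (fun j => ∫ x in Ω₀, ‖gradient u x‖ ^ 2 *
        ⟪Aop a (gradient u x) (gradient (φ j) x), gradient (φ j) x⟫)
      atTop (nhds 0)

/-- A `C^k` domain: nonempty, open, connected, with boundary locally given by a regular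
`C^k` defining function. -/
def IsCkDomain (k : ℕ∞) (Ω : Set (EuclideanSpace ℝ (Fin n))) : Prop :=
  Ω.Nonempty ∧ IsOpen Ω ∧ IsConnected Ω ∧
    ∀ p ∈ frontier Ω, ∃ V : Set (EuclideanSpace ℝ (Fin n)),
      ∃ g : EuclideanSpace ℝ (Fin n) → ℝ,
        IsOpen V ∧ p ∈ V ∧ ContDiffOn ℝ k g V ∧ (∀ x ∈ V, gradient g x ≠ 0) ∧
        Ω ∩ V = {x ∈ V | g x < 0}

/-- A `C^k` domain together with its interior unit normal field `η`. -/
def IsCkDomainWithNormal (k : ℕ∞) (Ω : Set (EuclideanSpace ℝ (Fin n)))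
    (η : EuclideanSpace ℝ (Fin n) → EuclideanSpace ℝ (Fin n)) : Prop :=
  Ω.Nonempty ∧ IsOpen Ω ∧ IsConnected Ω ∧
    ∀ p ∈ frontier Ω, ∃ V : Set (EuclideanSpace ℝ (Fin n)),
      ∃ g : EuclideanSpace ℝ (Fin n) → ℝ,
        IsOpen V ∧ p ∈ V ∧ ContDiffOn ℝ k g V ∧ (∀ x ∈ V, gradient g x ≠ 0) ∧
        Ω ∩ V = {x ∈ V | g x < 0} ∧
        η p = -(‖gradient g p‖⁻¹ • gradient g p)

/-- `a ∈ C^{1,1}_loc([0,∞))`: `C¹` on `[0,∞)` with locally Lipschitz derivative. -/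
def C11Loc (a : ℝ → ℝ) : Prop :=
  ContDiffOn ℝ 1 a (Ici 0) ∧
    ∀ t ∈ Ici (0 : ℝ), ∃ V ∈ 𝓝[Ici (0 : ℝ)] t, ∃ K, LipschitzOnWith K (deriv a) V

/-- The tangential part `∇ᵀ|∇u|` of the gradient of `|∇u|` (orthogonal to `ν = ∇u/|∇u|`). -/
def tangGrad (u : EuclideanSpace ℝ (Fin n) → ℝ) (x : EuclideanSpace ℝ (Fin n)) :
    EuclideanSpace ℝ (Fin n) :=
  gradient (fun y => ‖gradient u y‖) x -
    ⟪gradient (fun y => ‖gradient u y‖) x, ‖gradient u x‖⁻¹ • gradient u x⟫ •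
      (‖gradient u x‖⁻¹ • gradient u x)

/-- The squared Frobenius norm `‖Hess u‖²` of the Hessian of `u`. -/
def hessFrob2 (u : EuclideanSpace ℝ (Fin n) → ℝ) (x : EuclideanSpace ℝ (Fin n)) : ℝ :=
  ∑ i : Fin n, ‖(fderiv ℝ (gradient u) x) (EuclideanSpace.single i (1 : ℝ))‖ ^ 2

open Classical in
/-- The right-hand side `Q` of the Bochner inequality, set to `0` on `crit(u)`. -/
def bochnerQ (a f : ℝ → ℝ) (u : EuclideanSpace ℝ (Fin n) → ℝ)
    (x : EuclideanSpace ℝ (Fin n)) : ℝ :=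
  if gradient u x = 0 then 0
  else
    lam1 a ‖gradient u x‖ *
        ⟪(fderiv ℝ (gradient u) x) (‖gradient u x‖⁻¹ • gradient u x),
          ‖gradient u x‖⁻¹ • gradient u x⟫ ^ 2 +
      (lam1 a ‖gradient u x‖ + lam2 a ‖gradient u x‖) * ‖tangGrad u x‖ ^ 2 +
      lam2 a ‖gradient u x‖ *
        (hessFrob2 u x -
          ⟪(fderiv ℝ (gradient u) x) (‖gradient u x‖⁻¹ • gradient u x),
            ‖gradient u x‖⁻¹ • gradient u x⟫ ^ 2 -
          2 * ‖tangGrad u x‖ ^ 2) -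
      deriv f (u x) * ‖gradient u x‖ ^ 2

/-!
Differentiating the equation in a direction `v`, with the difference quotient moved onto
translates of the test function, gives `div (A(∇u) ∂ᵥ∇u) + f'(u) ∂ᵥu = 0` weakly, and this already
makes sense for `u ∈ C²`. Testing it with `∂ᵥu φ` and summing over an orthonormal basis of
directions yields a weak Bochner identity
`-∫ ⟪A(∇u) Hess u ∇u, ∇φ⟫ = ∫ φ (∑ᵢ ⟪A(∇u) ∂ᵢ∇u, ∂ᵢ∇u⟫ - f'(u) |∇u|²)`, where
`Hess u ∇u = ½ ∇|∇u|²`. Off the critical set the integrand on the right is `Q`, because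
`∇|∇u| = Hess u ν` there and `A(∇u)` has eigenvalue `λ₁` along `ν` and `λ₂` across it. On the
critical set it is `a(0) ‖Hess u‖² ≥ 0 = Q`: this is the only place where an inequality appears.
-/

section Flux

variable {E : Type*} [NormedAddCommGroup E] [InnerProductSpace ℝ E] {a : ℝ → ℝ}

/-- The regularity of the coefficient `a` that makes the flux `p ↦ a(|p|) p` continuously
differentiable. The powers `t ↦ t ^ (m - 2)` of the `m`-Laplacian, `m ≥ 2`, satisfy it although
they need not be differentiable at `0`. -/
structure RegularCoefficient (a : ℝ → ℝ) : Prop where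
  continuousOn : ContinuousOn a (Ici 0)
  differentiableOn : DifferentiableOn ℝ a (Ioi 0)
  continuousOn_mul_deriv : ContinuousOn (fun t => t * deriv a t) (Ici 0)

lemma C11Loc.regularCoefficient (ha : C11Loc a) : RegularCoefficient a where
  continuousOn := ha.1.continuousOn
  differentiableOn := (ha.1.differentiableOn one_ne_zero).mono Ioi_subset_Ici_self
  continuousOn_mul_deriv := by
    refine continuousOn_id.mul fun t ht => ?_
    obtain ⟨V, hV, K, hK⟩ := ha.2 t ht
    exact (hK.continuousOn t (mem_of_mem_nhdsWithin ht hV)).mono_of_mem_nhdsWithin hV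

/-- The paper's matrix `A(p)` as a continuous linear map on an arbitrary inner product space:
the derivative at `p` of the flux `p ↦ a(|p|) p`. -/
def fluxDeriv (a : ℝ → ℝ) (p : E) : E →L[ℝ] E :=
  a ‖p‖ • ContinuousLinearMap.id ℝ E + (deriv a ‖p‖ / ‖p‖) • (innerSL ℝ p).smulRight p

lemma fluxDeriv_apply (a : ℝ → ℝ) (p v : E) :
    fluxDeriv a p v = a ‖p‖ • v + (deriv a ‖p‖ / ‖p‖ * ⟪p, v⟫) • p := by
  simp [fluxDeriv, smul_smul]

lemma fluxDeriv_zero (a : ℝ → ℝ) : fluxDeriv a (0 : E) = a 0 • ContinuousLinearMap.id ℝ E := by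
  simp [fluxDeriv]

lemma Aop_eq_fluxDeriv (a : ℝ → ℝ) (p v : EuclideanSpace ℝ (Fin n)) :
    Aop a p v = fluxDeriv a p v :=
  (fluxDeriv_apply a p v).symm

lemma norm_rankOne_fluxDeriv (a : ℝ → ℝ) (p : E) :
    ‖(deriv a ‖p‖ / ‖p‖) • (innerSL ℝ p).smulRight p‖ = |‖p‖ * deriv a ‖p‖| := by
  rw [norm_smul, ContinuousLinearMap.norm_smulRight_apply, innerSL_apply_norm, norm_div,
    norm_norm, Real.norm_eq_abs, abs_mul, abs_norm]
  rcases eq_or_ne ‖p‖ 0 with hp | hp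
  · simp only [hp, mul_zero, zero_mul]
  · field_simp

lemma RegularCoefficient.continuous_fluxDeriv (ha : RegularCoefficient a) :
    Continuous (fluxDeriv a : E → E →L[ℝ] E) := by
  have hmul : Continuous fun p : E => ‖p‖ * deriv a ‖p‖ :=
    ha.continuousOn_mul_deriv.comp_continuous continuous_norm norm_nonneg
  refine ((ha.continuousOn.comp_continuous continuous_norm norm_nonneg).smul
    continuous_const).add (continuous_iff_continuousAt.mpr fun p => ?_)
  rcases eq_or_ne p 0 with rfl | hp
  · have hlim : Tendsto (fun p : E => |‖p‖ * deriv a ‖p‖|) (𝓝 0) (𝓝 0) := by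
      simpa using hmul.abs.tendsto 0
    simpa [ContinuousAt] using
      squeeze_zero_norm (fun p => (norm_rankOne_fluxDeriv a p).le) hlim
  · have hp' : ‖p‖ ≠ 0 := norm_ne_zero_iff.mpr hp
    have hquot : ContinuousAt (fun q : E => deriv a ‖q‖ / ‖q‖) p := by
      refine (hmul.continuousAt.div (continuous_norm.pow 2).continuousAt
        (pow_ne_zero 2 hp')).congr ?_
      filter_upwards [eventually_ne_nhds hp] with q hq
      have := norm_ne_zero_iff.mpr hq
      simp only [Pi.div_apply, Pi.pow_apply]
      field_simp
    exact hquot.smul (((ContinuousLinearMap.smulRightL ℝ E E).continuous.comp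
      (innerSL ℝ).continuous).clm_apply continuous_id).continuousAt

lemma hasFDerivAt_norm_of_ne_zero {p : E} (hp : p ≠ 0) :
    HasFDerivAt (fun q : E => ‖q‖) (‖p‖⁻¹ • innerSL ℝ p) p := by
  have h := (hasStrictFDerivAt_norm_sq p).hasFDerivAt.sqrt (pow_ne_zero 2 (norm_ne_zero_iff.mpr hp))
  simp only [Real.sqrt_sq (norm_nonneg _)] at h
  refine h.congr_fderiv ?_
  ext v
  simp only [one_div, mul_inv_rev, smul_apply, nsmul_eq_mul, smul_eq_mul, Nat.cast_ofNat]
  ring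

lemma RegularCoefficient.hasFDerivAt_flux (ha : RegularCoefficient a) (p : E) :
    HasFDerivAt (fun q : E => a ‖q‖ • q) (fluxDeriv a p) p := by
  rcases eq_or_ne p 0 with rfl | hp
  · have hsmall : (fun h : E => a ‖h‖ - a 0) =o[𝓝 0] (fun _ => (1 : ℝ)) := by
      rw [Asymptotics.isLittleO_one_iff]
      have hcont : Continuous fun h : E => a ‖h‖ - a 0 :=
        (ha.continuousOn.comp_continuous continuous_norm norm_nonneg).sub continuous_const
      simpa using hcont.tendsto 0
    rw [hasFDerivAt_iff_isLittleO_nhds_zero, fluxDeriv_zero]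
    simpa [sub_smul] using hsmall.smul_isBigO (Asymptotics.isBigO_refl (fun h : E => h) (𝓝 0))
  · have hderiv : HasDerivAt a (deriv a ‖p‖) ‖p‖ :=
      (ha.differentiableOn.differentiableAt (Ioi_mem_nhds (norm_pos_iff.mpr hp))).hasDerivAt
    refine ((hderiv.comp_hasFDerivAt p (hasFDerivAt_norm_of_ne_zero hp)).smul
      (hasFDerivAt_id p)).congr_fderiv ?_
    ext v
    simp [fluxDeriv, div_eq_mul_inv, smul_smul]

lemma RegularCoefficient.contDiff_flux (ha : RegularCoefficient a) :
    ContDiff ℝ 1 fun q : E => a ‖q‖ • q :=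
  contDiff_one_iff_hasFDerivAt.mpr ⟨_, ha.continuous_fluxDeriv, ha.hasFDerivAt_flux⟩

lemma sum_inner_fluxDeriv_apply_self {ι : Type*} [Fintype ι] (b : OrthonormalBasis ι ℝ E)
    {H : E →L[ℝ] E} (hH : (H : E →ₗ[ℝ] E).IsSymmetric) (a : ℝ → ℝ) (p : E) :
    ∑ i, ⟪fluxDeriv a p (H (b i)), H (b i)⟫ =
      a ‖p‖ * ∑ i, ‖H (b i)‖ ^ 2 + deriv a ‖p‖ / ‖p‖ * ‖H p‖ ^ 2 := by
  have hterm (i : ι) : ⟪fluxDeriv a p (H (b i)), H (b i)⟫ =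
      a ‖p‖ * ‖H (b i)‖ ^ 2 + deriv a ‖p‖ / ‖p‖ * ⟪H p, b i⟫ ^ 2 := by
    have hsymm : ⟪H p, b i⟫ = ⟪p, H (b i)⟫ := hH p (b i)
    rw [fluxDeriv_apply, inner_add_left, real_inner_smul_left, real_inner_smul_left,
      real_inner_self_eq_norm_sq, hsymm]
    ring
  simp only [hterm, Finset.sum_add_distrib, ← Finset.mul_sum, b.sum_sq_inner_left]

end Flux

section Gradient

variable {E : Type*} [NormedAddCommGroup E] [InnerProductSpace ℝ E]

lemma norm_sub_inner_smul_sq {ν : E} (hν : ‖ν‖ = 1) (w : E) :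
    ‖w - ⟪w, ν⟫ • ν‖ ^ 2 = ‖w‖ ^ 2 - ⟪w, ν⟫ ^ 2 := by
  rw [norm_sub_sq_real, real_inner_smul_right, norm_smul, hν, mul_one, Real.norm_eq_abs, sq_abs]
  ring

variable {u φ : E → ℝ} {V : E → E} {x : E}

lemma differentiableAt_fderiv_of_contDiffAt_two (hu : ContDiffAt ℝ 2 u x) :
    DifferentiableAt ℝ (fderiv ℝ u) x :=
  (hu.fderiv_right (m := 1) (by norm_num)).differentiableAt one_ne_zero

variable [CompleteSpace E]

lemma norm_gradient (u : E → ℝ) (x : E) : ‖gradient u x‖ = ‖fderiv ℝ u x‖ :=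
  (InnerProductSpace.toDual ℝ E).symm.norm_map _

lemma measurable_gradient [MeasurableSpace E] [BorelSpace E] (u : E → ℝ) :
    Measurable (gradient u) :=
  (InnerProductSpace.toDual ℝ E).symm.continuous.measurable.comp (measurable_fderiv ℝ u)

lemma gradient_eq_zero_of_notMem_tsupport (hx : x ∉ tsupport u) : gradient u x = 0 := by
  have h : fderiv ℝ u x = 0 := by
    by_contra h
    exact hx (support_fderiv_subset ℝ h)
  rw [gradient, h, map_zero]

lemma gradient_comp_sub (u : E → ℝ) (w x : E) :
    gradient (fun y => u (y - w)) x = gradient u (x - w) := by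
  rw [gradient, gradient, fderiv_comp_sub]

lemma contDiffOn_gradient {Ω : Set E} {k m : WithTop ℕ∞} (hu : ContDiffOn ℝ m u Ω)
    (hΩ : IsOpen Ω) (hkm : k + 1 ≤ m) : ContDiffOn ℝ k (gradient u) Ω :=
  (InnerProductSpace.toDual ℝ E).symm.contDiff.comp_contDiffOn (hu.fderiv_of_isOpen hΩ hkm)

lemma inner_fderiv_gradient (hu : DifferentiableAt ℝ (fderiv ℝ u) x) (v w : E) :
    ⟪fderiv ℝ (gradient u) x v, w⟫ = fderiv ℝ (fderiv ℝ u) x v w := by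
  have h : HasFDerivAt (gradient u) _ x :=
    (InnerProductSpace.toDual ℝ E).symm.toContinuousLinearEquiv.hasFDerivAt.comp x hu.hasFDerivAt
  rw [h.fderiv]
  simp

lemma differentiableAt_gradient (hu : ContDiffAt ℝ 2 u x) : DifferentiableAt ℝ (gradient u) x :=
  (InnerProductSpace.toDual ℝ E).symm.toContinuousLinearEquiv.differentiableAt.comp x
    (differentiableAt_fderiv_of_contDiffAt_two hu)

lemma isSymmetric_fderiv_gradient (hu : ContDiffAt ℝ 2 u x) :
    (fderiv ℝ (gradient u) x : E →ₗ[ℝ] E).IsSymmetric := fun v w => by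
  have hd := differentiableAt_fderiv_of_contDiffAt_two hu
  rw [ContinuousLinearMap.coe_coe, real_inner_comm _ v, inner_fderiv_gradient hd,
    inner_fderiv_gradient hd]
  exact hu.isSymmSndFDerivAt (by simp) v w

lemma gradient_norm_comp (hV : DifferentiableAt ℝ V x)
    (hsymm : (fderiv ℝ V x : E →ₗ[ℝ] E).IsSymmetric) (hx : V x ≠ 0) :
    gradient (fun y => ‖V y‖) x = fderiv ℝ V x (‖V x‖⁻¹ • V x) := by
  have h : HasFDerivAt (fun y => ‖V y‖) _ x :=
    (hasFDerivAt_norm_of_ne_zero hx).comp x hV.hasFDerivAt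
  refine ext_inner_right ℝ fun w => ?_
  have hw : ⟪fderiv ℝ V x (‖V x‖⁻¹ • V x), w⟫ = ⟪‖V x‖⁻¹ • V x, fderiv ℝ V x w⟫ := hsymm _ w
  rw [inner_gradient_left, h.fderiv, hw, real_inner_smul_left]
  simp

lemma gradient_norm_sq_comp (hV : DifferentiableAt ℝ V x)
    (hsymm : (fderiv ℝ V x : E →ₗ[ℝ] E).IsSymmetric) :
    gradient (fun y => ‖V y‖ ^ 2) x = (2 : ℝ) • fderiv ℝ V x (V x) := by
  refine ext_inner_right ℝ fun w => ?_
  have hw : ⟪fderiv ℝ V x (V x), w⟫ = ⟪V x, fderiv ℝ V x w⟫ := hsymm _ w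
  rw [inner_gradient_left, hV.hasFDerivAt.norm_sq.fderiv, real_inner_smul_left, hw]
  simp

lemma gradient_inner_mul (hV : DifferentiableAt ℝ V x)
    (hsymm : (fderiv ℝ V x : E →ₗ[ℝ] E).IsSymmetric) (hφ : DifferentiableAt ℝ φ x) (v : E) :
    gradient (fun y => ⟪V y, v⟫ * φ y) x =
      ⟪V x, v⟫ • gradient φ x + φ x • fderiv ℝ V x v := by
  have hVv : HasFDerivAt (fun y => ⟪V y, v⟫) _ x :=
    hV.hasFDerivAt.inner ℝ (hasFDerivAt_const v x)
  refine ext_inner_right ℝ fun w => ?_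
  have hw : ⟪fderiv ℝ V x v, w⟫ = ⟪v, fderiv ℝ V x w⟫ := hsymm v w
  have h : HasFDerivAt (fun y => ⟪V y, v⟫ * φ y) _ x := hVv.mul hφ.hasFDerivAt
  rw [inner_gradient_left, h.fderiv, inner_add_left, real_inner_smul_left, real_inner_smul_left,
    inner_gradient_left, hw, real_inner_comm _ v]
  simp

end Gradient

section LipschitzProduct

lemma lipschitzWith_mul_of_lipschitzOnWith_support {X : Type*} [PseudoMetricSpace X]
    {g φ : X → ℝ} {B C D L : NNReal} (hg : LipschitzOnWith C g (Function.support φ))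
    (hφ : LipschitzWith L φ) (hB : ∀ x ∈ Function.support φ, |g x| ≤ B) (hD : ∀ x, |φ x| ≤ D) :
    LipschitzWith (B * L + D * C) fun x => g x * φ x := by
  have hφL (x y : X) : |φ x - φ y| ≤ L * dist x y := hφ.dist_le_mul x y
  have key (x y : X) (hx : x ∈ Function.support φ) :
      |g x * φ x - g y * φ y| ≤ (B * L + D * C) * dist x y := by
    by_cases hy : y ∈ Function.support φ
    · have hgC : |g x - g y| ≤ C * dist x y := hg.dist_le_mul x hx y hy
      calc |g x * φ x - g y * φ y| = |g x * (φ x - φ y) + φ y * (g x - g y)| := by ring_nf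
        _ ≤ |g x| * |φ x - φ y| + |φ y| * |g x - g y| := by
          rw [← abs_mul, ← abs_mul]
          exact abs_add_le _ _
        _ ≤ B * (L * dist x y) + D * (C * dist x y) := by
          gcongr
          exacts [hB x hx, hφL x y, hD y]
        _ = (B * L + D * C) * dist x y := by ring
    · have hy0 : φ y = 0 := Function.notMem_support.mp hy
      calc |g x * φ x - g y * φ y| = |g x| * |φ x - φ y| := by
            rw [hy0, mul_zero, sub_zero, sub_zero, abs_mul]
        _ ≤ B * (L * dist x y) := by
          gcongr
          exacts [hB x hx, hφL x y]
        _ ≤ (B * L + D * C) * dist x y := by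
          rw [add_mul, mul_assoc]
          exact le_add_of_nonneg_right (by positivity)
  refine LipschitzWith.of_dist_le_mul fun x y => ?_
  rw [Real.dist_eq]
  push_cast
  by_cases hx : x ∈ Function.support φ
  · exact key x y hx
  by_cases hy : y ∈ Function.support φ
  · rw [abs_sub_comm, dist_comm]
    exact key y x hy
  · rw [Function.notMem_support.mp hx, Function.notMem_support.mp hy, mul_zero, mul_zero,
      sub_zero, abs_zero]
    positivity

lemma locallyLipschitzOn_of_contDiffOn_of_isOpen {E F : Type*} [NormedAddCommGroup E]
    [NormedSpace ℝ E] [NormedAddCommGroup F] [NormedSpace ℝ F] {g : E → F} {Ω : Set E}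
    (hg : ContDiffOn ℝ 1 g Ω) (hΩ : IsOpen Ω) : LocallyLipschitzOn Ω g := fun _ hx =>
  let ⟨C, t, ht, hgt⟩ := (hg.contDiffAt (hΩ.mem_nhds hx)).exists_lipschitzOnWith
  ⟨C, t, mem_nhdsWithin_of_mem_nhds ht, hgt⟩

end LipschitzProduct

section TranslatedIntegral

lemma exists_isCompact_eventually_add_smul_mem {E : Type*} [NormedAddCommGroup E]
    [NormedSpace ℝ E] [ProperSpace E] {K Ω : Set E} (hΩ : IsOpen Ω)
    (hK : IsCompact K) (hKΩ : K ⊆ Ω) (v : E) :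
    ∃ L ⊆ Ω, IsCompact L ∧ ∀ᶠ h : ℝ in 𝓝 0, ∀ x ∈ K, x + h • v ∈ L := by
  obtain ⟨δ, hδ, hδΩ⟩ := hK.exists_cthickening_subset_open hΩ hKΩ
  refine ⟨cthickening δ K, hδΩ, hK.cthickening, ?_⟩
  have hsmall : ∀ᶠ h : ℝ in 𝓝 0, ‖h • v‖ < δ :=
    (isOpen_lt (by fun_prop) continuous_const).mem_nhds (by simpa using hδ)
  filter_upwards [hsmall] with h hh x hx
  exact mem_cthickening_of_dist_le _ x δ K hx (by simpa using hh.le)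

variable {E F : Type*} [NormedAddCommGroup E] [MeasurableSpace E]
  [OpensMeasurableSpace E] [NormedAddCommGroup F] [InnerProductSpace ℝ F] {K : Set E}
  {μ : Measure E} {X η : E → F}

lemma integrableOn_inner_of_continuousOn (hK : IsCompact K) (hX : ContinuousOn X K)
    (hη : IntegrableOn η K μ) : IntegrableOn (fun x => ⟪X x, η x⟫) K μ := by
  obtain ⟨M, hM⟩ := hK.exists_bound_of_continuousOn hX
  refine (hη.norm.const_mul M).mono'
    ((hX.aestronglyMeasurable_of_isCompact hK hK.measurableSet).inner hη.1) ?_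
  filter_upwards [ae_restrict_mem hK.measurableSet] with x hx
  exact (norm_inner_le_norm _ _).trans (by gcongr; exact hM x hx)

lemma hasDerivAt_setIntegral_inner_translate [NormedSpace ℝ E] [ProperSpace E] {Ω : Set E}
    (hΩ : IsOpen Ω) (hK : IsCompact K) (hKΩ : K ⊆ Ω) (hX : ContDiffOn ℝ 1 X Ω)
    (hη : IntegrableOn η K μ) (v : E) :
    HasDerivAt (fun h : ℝ => ∫ x in K, ⟪X (x + h • v), η x⟫ ∂μ)
      (∫ x in K, ⟪fderiv ℝ X x v, η x⟫ ∂μ) 0 := by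
  obtain ⟨L, hLΩ, hL, hKL⟩ := exists_isCompact_eventually_add_smul_mem hΩ hK hKΩ v
  set s : Set ℝ := {h | ∀ x ∈ K, x + h • v ∈ L}
  have hdX : ContinuousOn (fderiv ℝ X) Ω := hX.continuousOn_fderiv_of_isOpen hΩ le_rfl
  obtain ⟨M, hM⟩ := hL.exists_bound_of_continuousOn (hdX.mono hLΩ)
  have hcont {h : ℝ} (hh : h ∈ s) : ContinuousOn (fun x => X (x + h • v)) K :=
    hX.continuousOn.comp (by fun_prop) fun x hx => hLΩ (hh x hx)
  have hderiv {x : E} (hx : x ∈ K) {h : ℝ} (hh : h ∈ s) :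
      HasDerivAt (fun h : ℝ => X (x + h • v)) (fderiv ℝ X (x + h • v) v) h :=
    ((hX.differentiableOn one_ne_zero).differentiableAt
      (hΩ.mem_nhds (hLΩ (hh x hx)))).hasFDerivAt.comp_hasDerivAt h
        (by simpa using ((hasDerivAt_id h).smul_const v).const_add x)
  have hX₀ : IntegrableOn (fun x => ⟪X (x + (0 : ℝ) • v), η x⟫) K μ :=
    integrableOn_inner_of_continuousOn hK (hcont (mem_of_mem_nhds hKL)) hη
  have hdX₀ : IntegrableOn (fun x => ⟪fderiv ℝ X (x + (0 : ℝ) • v) v, η x⟫) K μ := by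
    simpa only [zero_smul, add_zero] using integrableOn_inner_of_continuousOn hK
      ((hdX.mono hKΩ).clm_apply continuousOn_const) hη
  have hmeas : ∀ᶠ h : ℝ in 𝓝 0,
      AEStronglyMeasurable (fun x => ⟪X (x + h • v), η x⟫) (μ.restrict K) := by
    filter_upwards [hKL] with h hh
    exact (integrableOn_inner_of_continuousOn hK (hcont hh) hη).aestronglyMeasurable
  have hbound : ∀ᵐ x ∂μ.restrict K, ∀ h ∈ s,
      ‖⟪fderiv ℝ X (x + h • v) v, η x⟫‖ ≤ M * ‖v‖ * ‖η x‖ := by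
    filter_upwards [ae_restrict_mem hK.measurableSet] with x hx h hh
    refine (norm_inner_le_norm _ _).trans ?_
    gcongr
    exact (fderiv ℝ X (x + h • v)).le_of_opNorm_le (hM _ (hh x hx)) v
  have hinner : ∀ᵐ x ∂μ.restrict K, ∀ h ∈ s, HasDerivAt (fun h : ℝ => ⟪X (x + h • v), η x⟫)
      ⟪fderiv ℝ X (x + h • v) v, η x⟫ h := by
    filter_upwards [ae_restrict_mem hK.measurableSet] with x hx h hh
    simpa using (hderiv hx hh).inner ℝ (hasDerivAt_const h (η x))
  simpa only [zero_smul, add_zero] using (hasDerivAt_integral_of_dominated_loc_of_deriv_le hKL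
    hmeas hX₀ hdX₀.aestronglyMeasurable hbound (hη.norm.const_mul _) hinner).2

end TranslatedIntegral

section Support

variable {E : Type*} [NormedAddCommGroup E] [MeasurableSpace E] {S : Set E} {φ : E → ℝ}

lemma setIntegral_mul_of_tsupport_subset {μ : Measure E} (hφ : tsupport φ ⊆ S) (g : E → ℝ) :
    ∫ x in S, g x * φ x ∂μ = ∫ x, g x * φ x ∂μ :=
  setIntegral_eq_integral_of_forall_compl_eq_zero fun x hx => by
    rw [image_eq_zero_of_notMem_tsupport fun h => hx (hφ h), mul_zero]

lemma setIntegral_mul_translate [BorelSpace E] {μ : Measure E} [μ.IsAddRightInvariant] {w : E}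
    (hφ : tsupport (fun x => φ (x - w)) ⊆ S) (g : E → ℝ) :
    ∫ x in S, g x * φ (x - w) ∂μ = ∫ x in tsupport φ, g (x + w) * φ x ∂μ := by
  rw [setIntegral_mul_of_tsupport_subset hφ, setIntegral_mul_of_tsupport_subset subset_rfl,
    ← integral_add_right_eq_self _ w]
  simp only [add_sub_cancel_right]

variable [InnerProductSpace ℝ E] [CompleteSpace E]

lemma setIntegral_inner_gradient_of_tsupport_subset {μ : Measure E} (hφ : tsupport φ ⊆ S)
    (X : E → E) : ∫ x in S, ⟪X x, gradient φ x⟫ ∂μ = ∫ x, ⟪X x, gradient φ x⟫ ∂μ :=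
  setIntegral_eq_integral_of_forall_compl_eq_zero fun x hx => by
    rw [gradient_eq_zero_of_notMem_tsupport fun h => hx (hφ h), inner_zero_right]

lemma setIntegral_inner_gradient_translate [BorelSpace E] {μ : Measure E}
    [μ.IsAddRightInvariant] {w : E} (hφ : tsupport (fun x => φ (x - w)) ⊆ S) (X : E → E) :
    ∫ x in S, ⟪X x, gradient (fun y => φ (y - w)) x⟫ ∂μ =
      ∫ x in tsupport φ, ⟪X (x + w), gradient φ x⟫ ∂μ := by
  rw [setIntegral_inner_gradient_of_tsupport_subset hφ,
    setIntegral_inner_gradient_of_tsupport_subset subset_rfl, ← integral_add_right_eq_self _ w]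
  simp only [gradient_comp_sub, add_sub_cancel_right]

end Support

section TestFunctions

variable {Ω S : Set (EuclideanSpace ℝ (Fin n))} {φ : EuclideanSpace ℝ (Fin n) → ℝ}

lemma IsTestOn.isCompact_tsupport (hφ : IsTestOn Ω φ) : IsCompact (tsupport φ) := hφ.2.1

lemma IsTestOn.tsupport_subset (hφ : IsTestOn Ω φ) : tsupport φ ⊆ Ω := hφ.2.2

lemma IsTestOn.continuous (hφ : IsTestOn Ω φ) : Continuous φ :=
  hφ.1.choose_spec.continuous

lemma IsTestOn.ae_differentiableAt (hφ : IsTestOn Ω φ) : ∀ᵐ x, DifferentiableAt ℝ φ x :=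
  hφ.1.choose_spec.ae_differentiableAt

lemma IsTestOn.integrableOn_tsupport (hφ : IsTestOn Ω φ) : IntegrableOn φ (tsupport φ) :=
  hφ.continuous.continuousOn.integrableOn_compact hφ.isCompact_tsupport

lemma IsTestOn.integrableOn_gradient_tsupport (hφ : IsTestOn Ω φ) :
    IntegrableOn (gradient φ) (tsupport φ) := by
  obtain ⟨L, hL⟩ := hφ.1
  refine Measure.integrableOn_of_bounded (M := L) hφ.isCompact_tsupport.measure_lt_top.ne
    (measurable_gradient φ).aestronglyMeasurable (Eventually.of_forall fun x => ?_)
  rw [norm_gradient]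
  exact norm_fderiv_le_of_lipschitz ℝ hL

lemma IsTestOn.integrableOn_mul (hφ : IsTestOn Ω φ) (hΩ : IsOpen Ω)
    {g : EuclideanSpace ℝ (Fin n) → ℝ} (hg : ContinuousOn g Ω) :
    IntegrableOn (fun x => φ x * g x) Ω := by
  refine IntegrableOn.of_forall_sdiff_eq_zero ((hφ.continuous.continuousOn.mul
    (hg.mono hφ.tsupport_subset)).integrableOn_compact hφ.isCompact_tsupport)
    hΩ.measurableSet fun x hx => ?_
  rw [image_eq_zero_of_notMem_tsupport hx.2, zero_mul]

lemma IsTestOn.integrableOn_inner_gradient (hφ : IsTestOn Ω φ) (hΩ : IsOpen Ω)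
    {X : EuclideanSpace ℝ (Fin n) → EuclideanSpace ℝ (Fin n)} (hX : ContinuousOn X Ω) :
    IntegrableOn (fun x => ⟪X x, gradient φ x⟫) Ω := by
  refine IntegrableOn.of_forall_sdiff_eq_zero (integrableOn_inner_of_continuousOn
    hφ.isCompact_tsupport (hX.mono hφ.tsupport_subset) hφ.integrableOn_gradient_tsupport)
    hΩ.measurableSet fun x hx => ?_
  rw [gradient_eq_zero_of_notMem_tsupport hx.2, inner_zero_right]

lemma IsTestOn.mul_of_contDiffOn (hφ : IsTestOn Ω φ) (hΩ : IsOpen Ω)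
    {g : EuclideanSpace ℝ (Fin n) → ℝ} (hg : ContDiffOn ℝ 1 g Ω) :
    IsTestOn Ω fun x => g x * φ x := by
  obtain ⟨L, hL⟩ := hφ.1
  obtain ⟨C, hC⟩ := LocallyLipschitzOn.exists_lipschitzOnWith_of_compact hφ.isCompact_tsupport
    ((locallyLipschitzOn_of_contDiffOn_of_isOpen hg hΩ).mono hφ.tsupport_subset)
  obtain ⟨B, hB⟩ := hφ.isCompact_tsupport.exists_bound_of_continuousOn
    (hg.continuousOn.mono hφ.tsupport_subset)
  obtain ⟨D, hD⟩ := hφ.continuous.bounded_above_of_compact_support hφ.2.1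
  exact ⟨⟨_, lipschitzWith_mul_of_lipschitzOnWith_support (hC.mono (subset_tsupport φ)) hL
    (fun x hx => (hB x (subset_tsupport φ hx)).trans (Real.le_coe_toNNReal B))
    fun x => (hD x).trans (Real.le_coe_toNNReal D)⟩,
    hφ.2.1.mul_left, (tsupport_mul_subset_right (f := g)).trans hφ.tsupport_subset⟩

lemma IsTestOn.eventually_translate (hφ : IsTestOn Ω φ) (hΩ : IsOpen Ω)
    (v : EuclideanSpace ℝ (Fin n)) :
    ∀ᶠ h : ℝ in 𝓝 0, IsTestOn Ω fun x => φ (x - h • v) := by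
  obtain ⟨⟨L, hL⟩, hc, hs⟩ := hφ
  obtain ⟨K, hKΩ, -, hK⟩ := exists_isCompact_eventually_add_smul_mem hΩ hc.isCompact hs v
  filter_upwards [hK] with h hh
  have hcomp : (fun x => φ (x - h • v)) = φ ∘ Homeomorph.subRight (h • v) := rfl
  refine ⟨⟨L, LipschitzWith.of_dist_le_mul fun x y => ?_⟩, hcomp ▸ hc.comp_homeomorph _, ?_⟩
  · simpa using hL.dist_le_mul (x - h • v) (y - h • v)
  · rw [hcomp, tsupport_comp_eq_preimage]
    exact fun x hx => hKΩ (by simpa using hh (x - h • v) hx)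

end TestFunctions

section Linearization

variable {Ω : Set (EuclideanSpace ℝ (Fin n))} {a f : ℝ → ℝ}
  {u φ : EuclideanSpace ℝ (Fin n) → ℝ} {x : EuclideanSpace ℝ (Fin n)}

-- Only the first derivatives of `X` and `g` enter: the difference quotients are carried by
-- translates of the test function.
lemma setIntegral_inner_fderiv_of_forall_isTestOn
    {X : EuclideanSpace ℝ (Fin n) → EuclideanSpace ℝ (Fin n)}
    {g : EuclideanSpace ℝ (Fin n) → ℝ} (hΩ : IsOpen Ω) (hX : ContDiffOn ℝ 1 X Ω)
    (hg : ContDiffOn ℝ 1 g Ω) (hXg : ∀ ψ, IsTestOn Ω ψ →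
      ∫ x in Ω, ⟪X x, gradient ψ x⟫ = ∫ x in Ω, g x * ψ x)
    (hφ : IsTestOn Ω φ) (v : EuclideanSpace ℝ (Fin n)) :
    ∫ x in Ω, ⟪fderiv ℝ X x v, gradient φ x⟫ = ∫ x in Ω, fderiv ℝ g x v * φ x := by
  have hderivX := hasDerivAt_setIntegral_inner_translate hΩ hφ.isCompact_tsupport
    hφ.tsupport_subset hX hφ.integrableOn_gradient_tsupport v
  have hderivg := hasDerivAt_setIntegral_inner_translate hΩ hφ.isCompact_tsupport
    hφ.tsupport_subset hg hφ.integrableOn_tsupport v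
  simp only [Real.inner_apply] at hderivg
  have heq : (fun h : ℝ => ∫ x in tsupport φ, ⟪X (x + h • v), gradient φ x⟫) =ᶠ[𝓝 0]
      fun h => ∫ x in tsupport φ, g (x + h • v) * φ x := by
    filter_upwards [hφ.eventually_translate hΩ v] with h hh
    rw [← setIntegral_inner_gradient_translate hh.tsupport_subset,
      ← setIntegral_mul_translate hh.tsupport_subset, hXg _ hh]
  have h := hderivX.unique (hderivg.congr_of_eventuallyEq heq)
  rwa [setIntegral_inner_gradient_of_tsupport_subset subset_rfl,
    setIntegral_mul_of_tsupport_subset subset_rfl,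
    ← setIntegral_inner_gradient_of_tsupport_subset hφ.tsupport_subset,
    ← setIntegral_mul_of_tsupport_subset hφ.tsupport_subset] at h

lemma IsWeakSolution.setIntegral_inner_fluxDeriv_fderiv_gradient (hsol : IsWeakSolution a f Ω u)
    (hΩ : IsOpen Ω) (ha : RegularCoefficient a) (hf : ContDiff ℝ 1 f) (hu : ContDiffOn ℝ 2 u Ω)
    (hφ : IsTestOn Ω φ) (v : EuclideanSpace ℝ (Fin n)) :
    ∫ x in Ω, ⟪fluxDeriv a (gradient u x) (fderiv ℝ (gradient u) x v), gradient φ x⟫ =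
      ∫ x in Ω, deriv f (u x) * ⟪gradient u x, v⟫ * φ x := by
  have hgrad : ContDiffOn ℝ 1 (gradient u) Ω := contDiffOn_gradient hu hΩ (by norm_num)
  have hlin := setIntegral_inner_fderiv_of_forall_isTestOn hΩ (ha.contDiff_flux.comp_contDiffOn
    hgrad) (hf.comp_contDiffOn (hu.of_le one_le_two))
    (fun ψ hψ => by simpa only [Function.comp_apply, real_inner_smul_left] using hsol ψ hψ) hφ v
  have hflux {x : EuclideanSpace ℝ (Fin n)} (hx : x ∈ Ω) :
      fderiv ℝ ((fun p => a ‖p‖ • p) ∘ gradient u) x v =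
        fluxDeriv a (gradient u x) (fderiv ℝ (gradient u) x v) := by
    rw [((ha.hasFDerivAt_flux _).comp x (differentiableAt_gradient
      (hu.contDiffAt (hΩ.mem_nhds hx))).hasFDerivAt).fderiv, ContinuousLinearMap.comp_apply]
  have hsource {x : EuclideanSpace ℝ (Fin n)} (hx : x ∈ Ω) :
      fderiv ℝ (f ∘ u) x v = deriv f (u x) * ⟪gradient u x, v⟫ := by
    rw [(((hf.differentiable one_ne_zero) _).hasDerivAt.comp_hasFDerivAt x
      ((hu.differentiableOn two_ne_zero).differentiableAt (hΩ.mem_nhds hx)).hasFDerivAt).fderiv,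
      inner_gradient_left]
    rfl
  exact (setIntegral_congr_fun hΩ.measurableSet fun x hx => by simp only [hflux hx]).symm.trans
    (hlin.trans (setIntegral_congr_fun hΩ.measurableSet fun x hx => by simp only [hsource hx]))

end Linearization

section Bochner

variable {Ω : Set (EuclideanSpace ℝ (Fin n))} {a f : ℝ → ℝ}
  {u φ : EuclideanSpace ℝ (Fin n) → ℝ} {x : EuclideanSpace ℝ (Fin n)}

/-- The contribution of the direction `v` to `bochnerDensity`: the factor of `φ` that appears when
the `v`-derivative of the equation is tested with `⟪∇u, v⟫ φ`. -/
def directionalBochnerDensity (a f : ℝ → ℝ) (u : EuclideanSpace ℝ (Fin n) → ℝ)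
    (v x : EuclideanSpace ℝ (Fin n)) : ℝ :=
  ⟪fluxDeriv a (gradient u x) (fderiv ℝ (gradient u) x v), fderiv ℝ (gradient u) x v⟫ -
    deriv f (u x) * ⟪gradient u x, v⟫ ^ 2

/-- The divergence of `A(∇u) Hess u ∇u` along a solution of `div(a(|∇u|)∇u) + f(u) = 0`, as an
expression in the second derivatives of `u`. Unlike `bochnerQ` it is continuous across the
critical set of `u`. -/
def bochnerDensity (a f : ℝ → ℝ) (u : EuclideanSpace ℝ (Fin n) → ℝ)
    (x : EuclideanSpace ℝ (Fin n)) : ℝ :=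
  ∑ i, directionalBochnerDensity a f u (EuclideanSpace.basisFun (Fin n) ℝ i) x

lemma continuousOn_inner_gradient (hΩ : IsOpen Ω) (hu : ContDiffOn ℝ 2 u Ω)
    (v : EuclideanSpace ℝ (Fin n)) : ContinuousOn (fun x => ⟪gradient u x, v⟫) Ω :=
  (contDiffOn_gradient hu hΩ (k := 1) (by norm_num)).continuousOn.inner continuousOn_const

lemma continuousOn_fderiv_gradient_apply (hΩ : IsOpen Ω) (hu : ContDiffOn ℝ 2 u Ω)
    (v : EuclideanSpace ℝ (Fin n)) : ContinuousOn (fun x => fderiv ℝ (gradient u) x v) Ω :=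
  ((contDiffOn_gradient hu hΩ (k := 1) (by norm_num)).continuousOn_fderiv_of_isOpen hΩ
    le_rfl).clm_apply continuousOn_const

lemma continuousOn_fluxDeriv_fderiv_gradient_apply (hΩ : IsOpen Ω) (ha : RegularCoefficient a)
    (hu : ContDiffOn ℝ 2 u Ω) (v : EuclideanSpace ℝ (Fin n)) :
    ContinuousOn (fun x => fluxDeriv a (gradient u x) (fderiv ℝ (gradient u) x v)) Ω :=
  (ha.continuous_fluxDeriv.comp_continuousOn (contDiffOn_gradient hu hΩ (k := 1)
    (by norm_num)).continuousOn).clm_apply (continuousOn_fderiv_gradient_apply hΩ hu v)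

lemma continuousOn_inner_smul_fluxDeriv (hΩ : IsOpen Ω) (ha : RegularCoefficient a)
    (hu : ContDiffOn ℝ 2 u Ω) (v : EuclideanSpace ℝ (Fin n)) :
    ContinuousOn (fun x => ⟪gradient u x, v⟫ •
      fluxDeriv a (gradient u x) (fderiv ℝ (gradient u) x v)) Ω :=
  (continuousOn_inner_gradient hΩ hu v).smul
    (continuousOn_fluxDeriv_fderiv_gradient_apply hΩ ha hu v)

lemma continuousOn_directionalBochnerDensity (hΩ : IsOpen Ω) (ha : RegularCoefficient a)
    (hf : ContDiff ℝ 1 f) (hu : ContDiffOn ℝ 2 u Ω) (v : EuclideanSpace ℝ (Fin n)) :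
    ContinuousOn (directionalBochnerDensity a f u v) Ω :=
  ((continuousOn_fluxDeriv_fderiv_gradient_apply hΩ ha hu v).inner
    (continuousOn_fderiv_gradient_apply hΩ hu v)).sub
    ((hf.continuous_deriv_one.comp_continuousOn hu.continuousOn).mul
      ((continuousOn_inner_gradient hΩ hu v).pow 2))

lemma continuousOn_bochnerDensity (hΩ : IsOpen Ω) (ha : RegularCoefficient a)
    (hf : ContDiff ℝ 1 f) (hu : ContDiffOn ℝ 2 u Ω) : ContinuousOn (bochnerDensity a f u) Ω :=
  continuousOn_finsetSum _ fun _ _ => continuousOn_directionalBochnerDensity hΩ ha hf hu _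

lemma IsWeakSolution.setIntegral_mul_directionalBochnerDensity (hsol : IsWeakSolution a f Ω u)
    (hΩ : IsOpen Ω) (ha : RegularCoefficient a) (hf : ContDiff ℝ 1 f) (hu : ContDiffOn ℝ 2 u Ω)
    (hφ : IsTestOn Ω φ) (v : EuclideanSpace ℝ (Fin n)) :
    ∫ x in Ω, φ x * directionalBochnerDensity a f u v x =
      -∫ x in Ω, ⟪⟪gradient u x, v⟫ •
        fluxDeriv a (gradient u x) (fderiv ℝ (gradient u) x v), gradient φ x⟫ := by
  have hgrad : ContDiffOn ℝ 1 (gradient u) Ω := contDiffOn_gradient hu hΩ (by norm_num)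
  have hflux := hφ.integrableOn_inner_gradient hΩ (continuousOn_inner_smul_fluxDeriv hΩ ha hu v)
  have hdensity := hφ.integrableOn_mul hΩ
    (continuousOn_directionalBochnerDensity hΩ ha hf hu v)
  have hψ := hφ.mul_of_contDiffOn hΩ (hgrad.inner ℝ contDiffOn_const (g := fun _ => v))
  have hlin := hsol.setIntegral_inner_fluxDeriv_fderiv_gradient hΩ ha hf hu hψ v
  have hsource : IntegrableOn
      (fun x => deriv f (u x) * ⟪gradient u x, v⟫ * (⟪gradient u x, v⟫ * φ x)) Ω := by
    simpa only [mul_comm, Pi.mul_apply, Function.comp_apply] using hψ.integrableOn_mul hΩ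
      ((hf.continuous_deriv_one.comp_continuousOn hu.continuousOn).mul
        (continuousOn_inner_gradient hΩ hu v))
  have hproduct : ∀ᵐ x ∂volume.restrict Ω,
      ⟪fluxDeriv a (gradient u x) (fderiv ℝ (gradient u) x v),
        gradient (fun y => ⟪gradient u y, v⟫ * φ y) x⟫ =
      ⟪⟪gradient u x, v⟫ • fluxDeriv a (gradient u x) (fderiv ℝ (gradient u) x v),
        gradient φ x⟫ + φ x * directionalBochnerDensity a f u v x +
      deriv f (u x) * ⟪gradient u x, v⟫ * (⟪gradient u x, v⟫ * φ x) := by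
    filter_upwards [ae_restrict_mem hΩ.measurableSet, ae_restrict_of_ae hφ.ae_differentiableAt]
      with x hx hφx
    have hux := hu.contDiffAt (hΩ.mem_nhds hx)
    rw [gradient_inner_mul (differentiableAt_gradient hux) (isSymmetric_fderiv_gradient hux) hφx,
      inner_add_right, real_inner_smul_right, real_inner_smul_right, real_inner_smul_left,
      directionalBochnerDensity]
    ring
  rw [integral_congr_ae hproduct, integral_add (hflux.integrable.fun_add hdensity) hsource,
    integral_add hflux hdensity] at hlin
  linarith

theorem IsWeakSolution.setIntegral_mul_bochnerDensity (hsol : IsWeakSolution a f Ω u)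
    (hΩ : IsOpen Ω) (ha : RegularCoefficient a) (hf : ContDiff ℝ 1 f) (hu : ContDiffOn ℝ 2 u Ω)
    (hφ : IsTestOn Ω φ) :
    ∫ x in Ω, φ x * bochnerDensity a f u x =
      -∫ x in Ω, ⟪fluxDeriv a (gradient u x) (fderiv ℝ (gradient u) x (gradient u x)),
        gradient φ x⟫ := by
  set e := EuclideanSpace.basisFun (Fin n) ℝ
  have hflux (x : EuclideanSpace ℝ (Fin n)) :
      ⟪fluxDeriv a (gradient u x) (fderiv ℝ (gradient u) x (gradient u x)), gradient φ x⟫ =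
      ∑ i, ⟪⟪gradient u x, e i⟫ • fluxDeriv a (gradient u x) (fderiv ℝ (gradient u) x (e i)),
        gradient φ x⟫ := by
    have h := congrArg (fluxDeriv a (gradient u x) ∘L fderiv ℝ (gradient u) x)
      (e.sum_repr' (gradient u x))
    simp only [map_sum, map_smul, ContinuousLinearMap.comp_apply] at h
    simp only [← h, sum_inner, real_inner_comm]
  simp only [bochnerDensity, Finset.mul_sum, hflux]
  rw [integral_finsetSum, integral_finsetSum, ← Finset.sum_neg_distrib]
  · exact Finset.sum_congr rfl fun i _ =>
      hsol.setIntegral_mul_directionalBochnerDensity hΩ ha hf hu hφ (e i)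
  · exact fun i _ => hφ.integrableOn_inner_gradient hΩ
      (continuousOn_inner_smul_fluxDeriv hΩ ha hu (e i))
  · exact fun i _ => hφ.integrableOn_mul hΩ
      (continuousOn_directionalBochnerDensity hΩ ha hf hu (e i))

lemma bochnerDensity_eq (hu : ContDiffAt ℝ 2 u x) :
    bochnerDensity a f u x = a ‖gradient u x‖ * hessFrob2 u x +
      deriv a ‖gradient u x‖ / ‖gradient u x‖ *
        ‖fderiv ℝ (gradient u) x (gradient u x)‖ ^ 2 -
      deriv f (u x) * ‖gradient u x‖ ^ 2 := by
  simp only [bochnerDensity, directionalBochnerDensity]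
  rw [Finset.sum_sub_distrib, ← Finset.mul_sum, OrthonormalBasis.sum_sq_inner_left,
    sum_inner_fluxDeriv_apply_self _ (isSymmetric_fderiv_gradient hu)]
  simp only [EuclideanSpace.basisFun_apply, hessFrob2]

lemma bochnerQ_eq_bochnerDensity (hu : ContDiffAt ℝ 2 u x) (hx : gradient u x ≠ 0) :
    bochnerQ a f u x = bochnerDensity a f u x := by
  set ν := ‖gradient u x‖⁻¹ • gradient u x with hν
  have hr : ‖gradient u x‖ ≠ 0 := norm_ne_zero_iff.mpr hx
  have hunit : ‖ν‖ = 1 := norm_smul_inv_norm hx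
  have htang : ‖tangGrad u x‖ ^ 2 =
      ‖fderiv ℝ (gradient u) x ν‖ ^ 2 - ⟪fderiv ℝ (gradient u) x ν, ν⟫ ^ 2 := by
    rw [tangGrad, gradient_norm_comp (differentiableAt_gradient hu)
      (isSymmetric_fderiv_gradient hu) hx, ← hν, norm_sub_inner_smul_sq hunit]
  have hHgrad : ‖fderiv ℝ (gradient u) x (gradient u x)‖ ^ 2 =
      ‖gradient u x‖ ^ 2 * ‖fderiv ℝ (gradient u) x ν‖ ^ 2 := by
    rw [hν, map_smul, norm_smul, norm_inv, norm_norm, mul_pow, inv_pow,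
      mul_inv_cancel_left₀ (pow_ne_zero 2 hr)]
  rw [bochnerQ, if_neg hx, ← hν, bochnerDensity_eq hu, htang, hHgrad, lam1, lam2]
  field_simp
  ring

lemma bochnerQ_le_bochnerDensity (ha : 0 ≤ a 0) (hu : ContDiffAt ℝ 2 u x) :
    bochnerQ a f u x ≤ bochnerDensity a f u x := by
  by_cases hx : gradient u x = 0
  · have hfrob : 0 ≤ hessFrob2 u x := Finset.sum_nonneg fun i _ => sq_nonneg _
    rw [bochnerQ, if_pos hx, bochnerDensity_eq hu, hx]
    simpa using mul_nonneg ha hfrob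
  · exact (bochnerQ_eq_bochnerDensity hu hx).le

lemma integrableOn_mul_bochnerQ (hΩ : IsOpen Ω) (ha : RegularCoefficient a)
    (hf : ContDiff ℝ 1 f) (hu : ContDiffOn ℝ 2 u Ω) (hφ : IsTestOn Ω φ) :
    IntegrableOn (fun x => φ x * bochnerQ a f u x) Ω := by
  have hnoncrit : MeasurableSet {x | gradient u x ≠ 0} :=
    (measurable_gradient u (measurableSet_singleton 0)).compl
  refine ((hφ.integrableOn_mul hΩ
    (continuousOn_bochnerDensity hΩ ha hf hu)).indicator hnoncrit).congr_fun
    (fun x hx => ?_) hΩ.measurableSet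
  by_cases hcrit : gradient u x = 0
  · simp [bochnerQ, hcrit]
  · simp [bochnerQ_eq_bochnerDensity (hu.contDiffAt (hΩ.mem_nhds hx)) hcrit, hcrit]

end Bochner

theorem bochner_weak_inequality_general {Ω : Set (EuclideanSpace ℝ (Fin n))} (hΩ : IsOpen Ω)
    {a f : ℝ → ℝ} (ha : RegularCoefficient a) (ha0 : 0 ≤ a 0) (hf : ContDiff ℝ 1 f)
    {u : EuclideanSpace ℝ (Fin n) → ℝ} (hu : ContDiffOn ℝ 2 u Ω) (hsol : IsWeakSolution a f Ω u)
    {φ : EuclideanSpace ℝ (Fin n) → ℝ} (hφ : IsTestOn Ω φ) (hφ0 : ∀ x, 0 ≤ φ x) :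
    ∫ x in Ω, φ x * bochnerQ a f u x
      ≤ -(1 / 2) * ∫ x in Ω,
          ⟪Aop a (gradient u x) (gradient (fun y => ‖gradient u y‖ ^ 2) x), gradient φ x⟫ := by
  have hflux : ∫ x in Ω,
      ⟪Aop a (gradient u x) (gradient (fun y => ‖gradient u y‖ ^ 2) x), gradient φ x⟫ =
      2 * ∫ x in Ω, ⟪fluxDeriv a (gradient u x) (fderiv ℝ (gradient u) x (gradient u x)),
        gradient φ x⟫ := by
    rw [← integral_const_mul]
    refine setIntegral_congr_fun hΩ.measurableSet fun x hx => ?_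
    have hux := hu.contDiffAt (hΩ.mem_nhds hx)
    simp only [Aop_eq_fluxDeriv, gradient_norm_sq_comp (differentiableAt_gradient hux)
      (isSymmetric_fderiv_gradient hux), map_smul, real_inner_smul_left]
  calc ∫ x in Ω, φ x * bochnerQ a f u x ≤ ∫ x in Ω, φ x * bochnerDensity a f u x :=
        setIntegral_mono_on (integrableOn_mul_bochnerQ hΩ ha hf hu hφ)
          (hφ.integrableOn_mul hΩ (continuousOn_bochnerDensity hΩ ha hf hu)) hΩ.measurableSet
          fun x hx => mul_le_mul_of_nonneg_left
            (bochnerQ_le_bochnerDensity ha0 (hu.contDiffAt (hΩ.mem_nhds hx))) (hφ0 x)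
    _ = _ := by
      rw [hsol.setIntegral_mul_bochnerDensity hΩ ha hf hu hφ, hflux]
      ring

/-- The weak Bochner-type inequality (4.1) of the paper, in the Euclidean (Ricci-flat) case. -/
theorem bochner_weak_inequality
    (n : ℕ) (Ω : Set (EuclideanSpace ℝ (Fin n))) (hΩ : IsOpen Ω)
    (a : ℝ → ℝ) (ha : C11Loc a)
    (hapos : ∀ t ≥ (0 : ℝ), 0 < a t) (hlam : ∀ t ≥ (0 : ℝ), 0 < lam1 a t)
    (f : ℝ → ℝ) (hf : ContDiff ℝ 1 f)
    (u : EuclideanSpace ℝ (Fin n) → ℝ) (hu : ContDiffOn ℝ 3 u Ω)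
    (hsol : IsWeakSolution a f Ω u) :
    ∀ φ : EuclideanSpace ℝ (Fin n) → ℝ, IsTestOn Ω φ → (∀ x, 0 ≤ φ x) →
      ∫ x in Ω, φ x * bochnerQ a f u x
        ≤ -(1 / 2) * ∫ x in Ω,
            ⟪Aop a (gradient u x) (gradient (fun y => ‖gradient u y‖ ^ 2) x),
              gradient φ x⟫ :=
  fun _ hφ hφ0 => bochner_weak_inequality_general hΩ ha.regularCoefficient (hapos 0 le_rfl).le hf
    (hu.of_le (by norm_num)) hsol hφ hφ0
end
end

section
/- Let Ω ⊆ ℝⁿ be a C² domain, let a ∈ C¹([0,∞)) satisfy a(t) > 0 and (t·a(t))′ > 0 for all t ≥ 0, and let u ∈ C²(cl Ω). Let Γ be a connected component of ∂Ω on which u is constant and on which the normal derivative ∂_η u = ⟨∇u, η⟩ is a constant c. Then for every fixed vector e ∈ ℝⁿ, setting w := ⟨∇u, e⟩, the identity ⟨ (1/2)·w·A(∇u)∇(|∇u|²) − |∇u|²·A(∇u)∇w , η ⟩ = 0 holds at every point of Γ. -/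
open MeasureTheory Set Metric Filter
open scoped RealInnerProductSpace Topology ENNReal

noncomputable section

variable {n : ℕ}

/-!
Straightening the boundary by a `C¹` chart whose derivative at the base point is the identity turns
`Ω` into a half-space. There a function which is `C¹` up to the closure has a one-sided Fréchet
derivative, so a function constant on a boundary component has vanishing derivative in the tangent
directions. Applied to `u` this gives `∇u = c η` on `Γ`, hence `|∇u|² = c²` there; applied to
`|∇u|²` it gives `⟨∇u, Hess u · τ⟩ = 0` for tangent `τ`. As `A(∇u)` is symmetric with eigenvector
`∇u`, the identity reduces to the latter equation for the tangential part `τ` of `e`.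
-/

section UpToClosure

variable {E F G : Type*} [NormedAddCommGroup E] [NormedSpace ℝ E]
  [NormedAddCommGroup F] [NormedSpace ℝ F] [NormedAddCommGroup G] [NormedSpace ℝ G]

/-- `f` is of class `C¹` up to the closure of `s`, in the sense that `f` and its derivative in `s`
extend continuously to `closure s`; the extension of the derivative is `f'`. No differentiability
at the points of `closure s \ s` is asked for. -/
structure HasFDerivUpToClosure (f : E → F) (f' : E → E →L[ℝ] F) (s : Set E) : Prop where
  continuousOn : ContinuousOn f (closure s)
  continuousOn_fderiv : ContinuousOn f' (closure s)
  hasFDerivAt : ∀ x ∈ s, HasFDerivAt f (f' x) x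

namespace HasFDerivUpToClosure

variable {f : E → F} {f' : E → E →L[ℝ] F} {s : Set E}

lemma of_contDiffAt (hf : ∀ x ∈ closure s, ContDiffAt ℝ 1 f x) :
    HasFDerivUpToClosure f (fderiv ℝ f) s where
  continuousOn x hx := (hf x hx).continuousAt.continuousWithinAt
  continuousOn_fderiv x hx :=
    ((hf x hx).continuousAt_fderiv one_ne_zero).continuousWithinAt
  hasFDerivAt x hx :=
    ((hf x (subset_closure hx)).differentiableAt one_ne_zero).hasFDerivAt

lemma comp {g : F → G} {g' : F → F →L[ℝ] G} {t : Set F} (hg : HasFDerivUpToClosure g g' t)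
    (hf : HasFDerivUpToClosure f f' s) (hst : MapsTo f s t) :
    HasFDerivUpToClosure (g ∘ f) (fun x => (g' (f x)).comp (f' x)) s where
  continuousOn := hg.continuousOn.comp hf.continuousOn (hst.closure_of_continuousOn hf.continuousOn)
  continuousOn_fderiv :=
    (hg.continuousOn_fderiv.comp hf.continuousOn
      (hst.closure_of_continuousOn hf.continuousOn)).clm_comp hf.continuousOn_fderiv
  hasFDerivAt x hx := (hg.hasFDerivAt _ (hst hx)).comp x (hf.hasFDerivAt x hx)

lemma norm_sq {F : Type*} [NormedAddCommGroup F] [InnerProductSpace ℝ F] {f : E → F}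
    {f' : E → E →L[ℝ] F} (hf : HasFDerivUpToClosure f f' s) :
    HasFDerivUpToClosure (fun x => ‖f x‖ ^ 2)
      (fun x => 2 • (innerSL ℝ (f x)).comp (f' x)) s where
  continuousOn := hf.continuousOn.norm.pow 2
  continuousOn_fderiv :=
    (((innerSL ℝ).continuous.comp_continuousOn hf.continuousOn).clm_comp
      hf.continuousOn_fderiv).const_smul 2
  hasFDerivAt x hx := (hf.hasFDerivAt x hx).norm_sq

lemma hasFDerivWithinAt_closure (hf : HasFDerivUpToClosure f f' s) (hconv : Convex ℝ s)
    (hopen : IsOpen s) {x : E} (hx : x ∈ closure s) :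
    HasFDerivWithinAt f (f' x) (closure s) x := by
  refine hasFDerivWithinAt_closure_of_tendsto_fderiv
    (fun y hy => (hf.hasFDerivAt y hy).differentiableAt.differentiableWithinAt) hconv hopen
    (fun y hy => (hf.continuousOn y hy).mono subset_closure) ?_
  refine ((hf.continuousOn_fderiv x hx).mono subset_closure).tendsto.congr' ?_
  filter_upwards [self_mem_nhdsWithin] with y hy using (hf.hasFDerivAt y hy).fderiv.symm

end HasFDerivUpToClosure

end UpToClosure

section Boundary

variable {E : Type*} [NormedAddCommGroup E] [InnerProductSpace ℝ E]

lemma mem_closure_setOf_inner_pos {ν z : E} (hν : ν ≠ 0) (hz : 0 ≤ ⟪ν, z⟫) :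
    z ∈ closure {y | 0 < ⟪ν, y⟫} := by
  have hlim : Tendsto (fun s : ℝ => z + s • ν) (𝓝[>] 0) (𝓝 z) :=
    (Continuous.tendsto' (by fun_prop) 0 z (by simp)).mono_left nhdsWithin_le_nhds
  refine mem_closure_of_tendsto hlim ?_
  filter_upwards [self_mem_nhdsWithin] with s hs
  have hsν : 0 < s * ⟪ν, ν⟫ := mul_pos hs (real_inner_self_pos.2 hν)
  change 0 < ⟪ν, z + s • ν⟫
  rw [inner_add_right, real_inner_smul_right]
  linarith

/-- `Ψ` is a `C¹` chart of `Ω` at its boundary point `p`, with domain a neighbourhood of `0`: it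
takes the half-space `{z | 0 < ⟪ν, z⟫}` to `Ω`, and is normalised to have derivative `id` at `0`. -/
structure IsBoundaryChart (Ω : Set E) (ν p : E) (Ψ : E → E) : Prop where
  contDiffAt : ContDiffAt ℝ 1 Ψ 0
  map_zero : Ψ 0 = p
  hasFDerivAt_zero : HasFDerivAt Ψ (ContinuousLinearMap.id ℝ E) 0
  eventually_mem_iff : ∀ᶠ z in 𝓝 0, (Ψ z ∈ Ω ↔ 0 < ⟪ν, z⟫)

namespace IsBoundaryChart

variable {Ω : Set E} {ν p : E} {Ψ : E → E}

lemma eventually_mem_frontier (hΨ : IsBoundaryChart Ω ν p Ψ) (hν : ν ≠ 0) :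
    ∀ᶠ z in 𝓝 0, ⟪ν, z⟫ = 0 → Ψ z ∈ frontier Ω := by
  filter_upwards [hΨ.eventually_mem_iff.eventually_nhds,
    hΨ.contDiffAt.eventually (by simp)] with z hiff hcont hz
  have hnear : ∃ᶠ y in 𝓝 z, Ψ y ∈ Ω :=
    ((mem_closure_iff_frequently.1 (mem_closure_setOf_inner_pos hν hz.ge)).and_eventually
      hiff).mono fun y hy => hy.2.2 hy.1
  have hnot : Ψ z ∉ Ω := fun h => (hiff.self_of_nhds.1 h).ne' hz
  exact ⟨mem_closure_iff_frequently.2 (hcont.continuousAt.tendsto.frequently hnear),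
    fun h => hnot (interior_subset h)⟩

lemma eventually_mem_connectedComponentIn (hΨ : IsBoundaryChart Ω ν p Ψ) (hν : ν ≠ 0) :
    ∀ᶠ z in 𝓝 0, ⟪ν, z⟫ = 0 → Ψ z ∈ connectedComponentIn (frontier Ω) p := by
  obtain ⟨δ, hδ, hball⟩ := nhds_basis_ball.eventually_iff.1
    ((hΨ.contDiffAt.eventually (by simp)).and (hΨ.eventually_mem_frontier hν))
  set D : Set E := ball 0 δ ∩ {z | ⟪ν, z⟫ = 0}
  have hD : IsPreconnected D := ((convex_ball 0 δ).inter
    (convex_hyperplane (innerSL ℝ ν).isLinear 0)).isPreconnected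
  have himage : IsPreconnected (Ψ '' D) :=
    hD.image Ψ fun z hz => (hball hz.1).1.continuousAt.continuousWithinAt
  have hfrontier : Ψ '' D ⊆ frontier Ω := image_subset_iff.2 fun z hz => (hball hz.1).2 hz.2
  have hp : p ∈ Ψ '' D := ⟨0, ⟨mem_ball_self hδ, inner_zero_right ν⟩, hΨ.map_zero⟩
  filter_upwards [ball_mem_nhds 0 hδ] with z hz hzν
  exact himage.subset_connectedComponentIn hp hfrontier (mem_image_of_mem Ψ ⟨hz, hzν⟩)

lemma hasFDerivWithinAt_comp {F : Type*} [NormedAddCommGroup F] [NormedSpace ℝ F] {f : E → F}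
    {f' : E → E →L[ℝ] F} (hΨ : IsBoundaryChart Ω ν p Ψ) (hν : ν ≠ 0)
    (hf : HasFDerivUpToClosure f f' Ω) :
    HasFDerivWithinAt (f ∘ Ψ) (f' p) {z | 0 ≤ ⟪ν, z⟫} 0 := by
  obtain ⟨δ, hδ, hball⟩ := nhds_basis_closedBall.eventually_iff.1
    ((hΨ.contDiffAt.eventually (by simp)).and hΨ.eventually_mem_iff)
  set S : Set E := ball 0 δ ∩ {z | 0 < ⟪ν, z⟫}
  have hSball : closure S ⊆ closedBall 0 δ :=
    (closure_mono inter_subset_left).trans closure_ball_subset_closedBall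
  have hSΩ : MapsTo Ψ S Ω := fun z hz => (hball (ball_subset_closedBall hz.1)).2.2 hz.2
  have hhalf : ball 0 δ ∩ {z | 0 ≤ ⟪ν, z⟫} ⊆ closure S := fun z hz =>
    isOpen_ball.inter_closure ⟨hz.1, mem_closure_setOf_inner_pos hν hz.2⟩
  have hSconv : Convex ℝ S :=
    (convex_ball 0 δ).inter (convex_halfSpace_gt (innerSL ℝ ν).isLinear 0)
  have hSopen : IsOpen S := isOpen_ball.inter (isOpen_lt continuous_const (by fun_prop))
  have hcomp := hf.comp
    (HasFDerivUpToClosure.of_contDiffAt fun z hz => (hball (hSball hz)).1) hSΩ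
  have hderiv := hcomp.hasFDerivWithinAt_closure hSconv hSopen
    (hhalf ⟨mem_ball_self hδ, by simp⟩)
  rw [hΨ.map_zero, hΨ.hasFDerivAt_zero.fderiv, ContinuousLinearMap.comp_id] at hderiv
  exact hderiv.mono_of_mem_nhdsWithin
    (mem_nhdsWithin.2 ⟨ball 0 δ, isOpen_ball, mem_ball_self hδ, hhalf⟩)

end IsBoundaryChart

variable [CompleteSpace E]

lemma exists_straightening {h : E → ℝ} {ν p : E} (hν : ‖ν‖ = 1) (hC1 : ContDiffAt ℝ 1 h p)
    (hgrad : HasGradientAt h ν p) (hp : h p = 0) :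
    ∃ Ψ : E → E, ContDiffAt ℝ 1 Ψ 0 ∧ Ψ 0 = p ∧
      HasFDerivAt Ψ (ContinuousLinearMap.id ℝ E) 0 ∧ ∀ᶠ z in 𝓝 0, h (Ψ z) = ⟪ν, z⟫ := by
  -- Correct the translation `x ↦ x - p` along `ν` so that its `ν`-component becomes `h`.
  set Φ : E → E := fun x => (x - p) + (h x - ⟪ν, x - p⟫) • ν with hΦdef
  have hΦC1 : ContDiffAt ℝ 1 Φ p :=
    (contDiffAt_id.sub contDiffAt_const).add ((hC1.sub
      ((innerSL ℝ ν).contDiff.contDiffAt.comp p (contDiffAt_id.sub contDiffAt_const))).smul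
        contDiffAt_const)
  have hinner : HasFDerivAt (fun x => ⟪ν, x - p⟫) (innerSL ℝ ν) p :=
    (innerSL ℝ ν).hasFDerivAt.comp p ((hasFDerivAt_id p).sub_const p)
  have hΦ' : HasStrictFDerivAt Φ (ContinuousLinearEquiv.refl ℝ E : E →L[ℝ] E) p := by
    refine hΦC1.hasStrictFDerivAt' ?_ one_ne_zero
    refine (((hasFDerivAt_id p).sub_const p).add
      ((hgrad.hasFDerivAt.sub hinner).smul_const ν)).congr_fderiv ?_
    ext v
    simp
  have hΦp : Φ p = 0 := by simp [hΦdef, hp]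
  have hinnerΦ : ∀ x, ⟪ν, Φ x⟫ = h x := fun x => by
    rw [hΦdef, inner_add_right, real_inner_smul_right, real_inner_self_eq_norm_sq, hν]
    ring
  have hinverse := hΦ'.eventually_right_inverse
  rw [hΦp] at hinverse
  refine ⟨hΦ'.localInverse, hΦp ▸ hΦC1.to_localInverse hΦ'.hasFDerivAt one_ne_zero,
    hΦp ▸ hΦ'.localInverse_apply_image, hΦp ▸ hΦ'.to_localInverse.hasFDerivAt, ?_⟩
  filter_upwards [hinverse] with z hz
  rw [← hinnerΦ, hz]

/-- `ν` is the inner unit normal at the boundary point `p` of a set `Ω` which near `p` is a `C¹`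
domain. The local defining function `h` is normalised to be positive in `Ω` and to have gradient
`ν` at `p`. -/
structure IsInnerUnitNormalAt (Ω : Set E) (ν p : E) : Prop where
  norm_eq_one : ‖ν‖ = 1
  exists_defining : ∃ h : E → ℝ, ContDiffAt ℝ 1 h p ∧ h p = 0 ∧ HasGradientAt h ν p ∧
    ∀ᶠ x in 𝓝 p, (x ∈ Ω ↔ 0 < h x)

namespace IsInnerUnitNormalAt

variable {Ω : Set E} {ν p : E}

lemma ne_zero (hν : IsInnerUnitNormalAt Ω ν p) : ν ≠ 0 :=
  norm_ne_zero_iff.1 (hν.norm_eq_one ▸ one_ne_zero)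

lemma inner_self (hν : IsInnerUnitNormalAt Ω ν p) : ⟪ν, ν⟫ = 1 := by
  rw [real_inner_self_eq_norm_sq, hν.norm_eq_one, one_pow]

lemma exists_boundaryChart (hν : IsInnerUnitNormalAt Ω ν p) : ∃ Ψ, IsBoundaryChart Ω ν p Ψ := by
  obtain ⟨h, hC1, hp, hgrad, hΩ⟩ := hν.exists_defining
  obtain ⟨Ψ, hΨ, hΨ0, hΨ', hhΨ⟩ := exists_straightening hν.norm_eq_one hC1 hgrad hp
  refine ⟨Ψ, hΨ, hΨ0, hΨ', ?_⟩
  filter_upwards [hhΨ, hΨ.continuousAt.eventually (hΨ0.symm ▸ hΩ)] with z hz hzΩ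
  rw [hzΩ, hz]

end IsInnerUnitNormalAt

lemma HasFDerivUpToClosure.apply_eq_zero_of_inner_eq_zero {F : Type*} [NormedAddCommGroup F]
    [NormedSpace ℝ F] {f : E → F} {f' : E → E →L[ℝ] F} {Ω : Set E} {ν p τ : E} {y : F}
    (hf : HasFDerivUpToClosure f f' Ω) (hν : IsInnerUnitNormalAt Ω ν p)
    (hconst : ∀ q ∈ connectedComponentIn (frontier Ω) p, f q = y) (hτ : ⟪ν, τ⟫ = 0) :
    f' p τ = 0 := by
  obtain ⟨Ψ, hΨ⟩ := hν.exists_boundaryChart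
  have hντ : ∀ t : ℝ, ⟪ν, t • τ⟫ = 0 := fun t => by rw [real_inner_smul_right, hτ, mul_zero]
  have hline : HasDerivAt (fun t : ℝ => t • τ) τ 0 := by
    simpa using (hasDerivAt_id (0 : ℝ)).smul_const τ
  have hderiv : HasDerivAt (fun t : ℝ => f (Ψ (t • τ))) (f' p τ) 0 :=
    (hΨ.hasFDerivWithinAt_comp hν.ne_zero hf).comp_hasDerivAt_of_eq 0 hline
      (Eventually.of_forall fun t => (hντ t).ge) (zero_smul ℝ τ).symm
  have hlim : Tendsto (fun t : ℝ => t • τ) (𝓝 0) (𝓝 0) :=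
    hline.continuousAt.tendsto.trans (by rw [zero_smul])
  have hconst' : (fun t : ℝ => f (Ψ (t • τ))) =ᶠ[𝓝 0] fun _ => y := by
    filter_upwards [hlim.eventually (hΨ.eventually_mem_connectedComponentIn hν.ne_zero)] with t ht
    exact hconst _ (ht (hντ t))
  exact hderiv.unique ((hasDerivAt_const 0 y).congr_of_eventuallyEq hconst')

end Boundary

lemma inner_Aop_self (a : ℝ → ℝ) (p v : EuclideanSpace ℝ (Fin n)) :
    ⟪Aop a p v, p⟫ = lam1 a ‖p‖ * ⟪v, p⟫ := by
  have hcancel : deriv a ‖p‖ / ‖p‖ * ‖p‖ ^ 2 = ‖p‖ * deriv a ‖p‖ := by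
    rcases eq_or_ne ‖p‖ 0 with hp | hp
    · simp [hp]
    · field_simp
  rw [Aop, lam1, inner_add_left, real_inner_smul_left, real_inner_smul_left,
    real_inner_self_eq_norm_sq, real_inner_comm v p]
  linear_combination ⟪v, p⟫ * hcancel

lemma eq_zero_of_mem_frontier_of_eventually_mem_iff {X : Type*} [TopologicalSpace X] {Ω : Set X}
    {g : X → ℝ} {p : X} (hΩ : IsOpen Ω) (hp : p ∈ frontier Ω) (hg : ContinuousAt g p)
    (hiff : ∀ᶠ x in 𝓝 p, (x ∈ Ω ↔ g x < 0)) : g p = 0 := by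
  rw [hΩ.frontier_eq] at hp
  refine le_antisymm ?_ (not_lt.1 (hiff.self_of_nhds.not.1 hp.2))
  have hfreq : ∃ᶠ x in 𝓝 p, g x ≤ 0 :=
    ((mem_closure_iff_frequently.1 hp.1).and_eventually hiff).mono fun x hx => (hx.2.1 hx.1).le
  exact isClosed_Iic.mem_of_frequently_of_tendsto hfreq hg

lemma IsCkDomainWithNormal.isInnerUnitNormalAt {k : ℕ∞} (hk : 1 ≤ k)
    {Ω : Set (EuclideanSpace ℝ (Fin n))}
    {η : EuclideanSpace ℝ (Fin n) → EuclideanSpace ℝ (Fin n)}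
    (hΩ : IsCkDomainWithNormal k Ω η) {p : EuclideanSpace ℝ (Fin n)} (hp : p ∈ frontier Ω) :
    IsInnerUnitNormalAt Ω (η p) p := by
  obtain ⟨-, hopen, -, hloc⟩ := hΩ
  obtain ⟨V, g, hV, hpV, hg, hgrad, hΩV, hηp⟩ := hloc p hp
  have hgC1 : ContDiffAt ℝ 1 g p := (hg.contDiffAt (hV.mem_nhds hpV)).of_le (mod_cast hk)
  have hpos : 0 < ‖gradient g p‖⁻¹ := inv_pos.2 (norm_pos_iff.2 (hgrad p hpV))
  have hiff : ∀ᶠ x in 𝓝 p, (x ∈ Ω ↔ g x < 0) := by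
    filter_upwards [hV.mem_nhds hpV] with x hx
    simpa [hx] using Set.ext_iff.1 hΩV x
  have hgp : g p = 0 :=
    eq_zero_of_mem_frontier_of_eventually_mem_iff hopen hp hgC1.continuousAt hiff
  have hgradient : HasGradientAt g (gradient g p) p :=
    (hgC1.differentiableAt one_ne_zero).hasGradientAt
  refine ⟨?_, fun x => -(‖gradient g p‖⁻¹ * g x), by fun_prop, by simp [hgp], ?_, ?_⟩
  · simpa [hηp] using norm_smul_inv_norm (𝕜 := ℝ) (hgrad p hpV)
  · rw [hηp, hasGradientAt_iff_hasFDerivAt, map_neg, map_smul]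
    exact (hgradient.hasFDerivAt.const_mul _).neg
  · filter_upwards [hiff] with x hx
    rw [hx, ← mul_neg, mul_pos_iff_of_pos_left hpos, neg_pos]

section Cancellation

variable {E : Type*} [NormedAddCommGroup E] [InnerProductSpace ℝ E]

lemma inner_cancellation_eq_zero_of_tangent {A : E → E} {T : E →L[ℝ] E} {ν e : E} {c μ : ℝ}
    (hν : ‖ν‖ = 1) (hA : ∀ v, ⟪A v, c • ν⟫ = μ * ⟪v, c • ν⟫)
    (hT : ∀ τ, ⟪ν, τ⟫ = 0 → ⟪c • ν, T τ⟫ = 0) :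
    ⟪(⟪c • ν, e⟫ / 2) • A ((2 : ℝ) • T (c • ν)) - ‖c • ν‖ ^ 2 • A (T e), ν⟫ = 0 := by
  rcases eq_or_ne c 0 with rfl | hc
  · simp
  have hAν : ∀ v, ⟪A v, ν⟫ = μ * ⟪v, ν⟫ := fun v => by
    have hv := hA v
    rw [real_inner_smul_right, real_inner_smul_right, mul_left_comm] at hv
    exact mul_left_cancel₀ hc hv
  have htangent : ⟪c • ν, T (⟪ν, e⟫ • ν - e)⟫ = 0 := hT _ <| by
    rw [inner_sub_right, real_inner_smul_right, real_inner_self_eq_norm_sq, hν]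
    ring
  have hnorm : ‖c • ν‖ ^ 2 = c ^ 2 := by rw [norm_smul, hν, mul_one, Real.norm_eq_abs, sq_abs]
  rw [map_sub, map_smul, inner_sub_right, real_inner_smul_left, real_inner_smul_left,
    real_inner_smul_right] at htangent
  simp only [hnorm, inner_sub_left, real_inner_smul_left, hAν, map_smul]
  rw [real_inner_comm ν (T ν), real_inner_comm ν (T e)]
  linear_combination c * μ * htangent

variable [CompleteSpace E] {Ω : Set E}

lemma hasFDerivUpToClosure_of_eq_gradient {u : E → ℝ} {Du : E → E} (hΩ : IsOpen Ω)
    (hu : DifferentiableOn ℝ u Ω) (hucl : ContinuousOn u (closure Ω))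
    (hDu : ∀ x ∈ Ω, Du x = gradient u x) (hDuc : ContinuousOn Du (closure Ω)) :
    HasFDerivUpToClosure u (fun x => innerSL ℝ (Du x)) Ω where
  continuousOn := hucl
  continuousOn_fderiv := (innerSL ℝ).continuous.comp_continuousOn hDuc
  hasFDerivAt x hx := by
    rw [hDu x hx]
    exact (hu.differentiableAt (hΩ.mem_nhds hx)).hasGradientAt.hasFDerivAt

lemma hasFDerivUpToClosure_of_eq_fderiv_gradient {u : E → ℝ} {Du : E → E} {H : E → E →L[ℝ] E}
    (hΩ : IsOpen Ω) (hu : ContDiffOn ℝ 2 u Ω)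
    (hDu : ∀ x ∈ Ω, Du x = gradient u x) (hDuc : ContinuousOn Du (closure Ω))
    (hH : ∀ x ∈ Ω, H x = fderiv ℝ (gradient u) x) (hHc : ContinuousOn H (closure Ω)) :
    HasFDerivUpToClosure Du H Ω where
  continuousOn := hDuc
  continuousOn_fderiv := hHc
  hasFDerivAt x hx := by
    have hxΩ : Ω ∈ 𝓝 x := hΩ.mem_nhds hx
    have hfderiv : DifferentiableAt ℝ (fderiv ℝ u) x :=
      ((hu.contDiffAt hxΩ).fderiv_right (m := 1) one_add_one_eq_two.le).differentiableAt one_ne_zero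
    have hgradient : DifferentiableAt ℝ (gradient u) x :=
      (InnerProductSpace.toDual ℝ E).symm.differentiable.differentiableAt.comp x hfderiv
    rw [hH x hx]
    exact hgradient.hasFDerivAt.congr_of_eventuallyEq (eventually_of_mem hxΩ hDu)

lemma gradient_eq_inner_smul_normal {u : E → ℝ} {Du : E → E} {ν p : E} {b : ℝ}
    (hu : HasFDerivUpToClosure u (fun x => innerSL ℝ (Du x)) Ω)
    (hν : IsInnerUnitNormalAt Ω ν p)
    (hub : ∀ q ∈ connectedComponentIn (frontier Ω) p, u q = b) : Du p = ⟪Du p, ν⟫ • ν := by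
  set τ := Du p - ⟪Du p, ν⟫ • ν with hτdef
  have hτ : ⟪ν, τ⟫ = 0 := by
    rw [hτdef, inner_sub_right, real_inner_smul_right, hν.inner_self, real_inner_comm, mul_one,
      sub_self]
  have hDuτ : ⟪Du p, τ⟫ = 0 := hu.apply_eq_zero_of_inner_eq_zero hν hub hτ
  have hττ : ⟪τ, τ⟫ = 0 := by
    nth_rewrite 1 [hτdef]
    rw [inner_sub_left, real_inner_smul_left, hDuτ, hτ, mul_zero, sub_zero]
  exact sub_eq_zero.1 (inner_self_eq_zero.1 hττ)

lemma inner_fderiv_tangent_eq_zero_of_norm_eq {F : Type*} [NormedAddCommGroup F]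
    [InnerProductSpace ℝ F] {f : E → F} {f' : E → E →L[ℝ] F} {ν p τ : E} {r : ℝ}
    (hf : HasFDerivUpToClosure f f' Ω) (hν : IsInnerUnitNormalAt Ω ν p)
    (hnorm : ∀ q ∈ connectedComponentIn (frontier Ω) p, ‖f q‖ = r) (hτ : ⟪ν, τ⟫ = 0) :
    ⟪f p, f' p τ⟫ = 0 := by
  have hsq : (2 • (innerSL ℝ (f p)).comp (f' p)) τ = 0 :=
    hf.norm_sq.apply_eq_zero_of_inner_eq_zero hν (fun q hq => by rw [hnorm q hq]) hτ
  simpa using hsq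

theorem boundary_cancellation_identity_general {η : E → E} {p₀ : E}
    (hη : ∀ p ∈ connectedComponentIn (frontier Ω) p₀, IsInnerUnitNormalAt Ω (η p) p)
    {u : E → ℝ} {Du : E → E} {H : E → E →L[ℝ] E}
    (hu : HasFDerivUpToClosure u (fun x => innerSL ℝ (Du x)) Ω)
    (hDu : HasFDerivUpToClosure Du H Ω) {b c : ℝ}
    (hub : ∀ p ∈ connectedComponentIn (frontier Ω) p₀, u p = b)
    (hc : ∀ p ∈ connectedComponentIn (frontier Ω) p₀, ⟪Du p, η p⟫ = c)
    {p : E} (hp : p ∈ connectedComponentIn (frontier Ω) p₀)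
    {A : E → E} {μ : ℝ} (hA : ∀ v, ⟪A v, Du p⟫ = μ * ⟪v, Du p⟫) (e : E) :
    ⟪(⟪Du p, e⟫ / 2) • A ((2 : ℝ) • (H p) (Du p)) - ‖Du p‖ ^ 2 • A ((H p) e), η p⟫ = 0 := by
  have hDuη : ∀ q ∈ connectedComponentIn (frontier Ω) p₀, Du q = c • η q := fun q hq =>
    hc q hq ▸ gradient_eq_inner_smul_normal hu (hη q hq) (connectedComponentIn_eq hq ▸ hub)
  have hnorm : ∀ q ∈ connectedComponentIn (frontier Ω) p₀, ‖Du q‖ = |c| := fun q hq => by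
    rw [hDuη q hq, norm_smul, (hη q hq).norm_eq_one, mul_one, Real.norm_eq_abs]
  have htangent : ∀ τ, ⟪η p, τ⟫ = 0 → ⟪Du p, H p τ⟫ = 0 := fun τ =>
    inner_fderiv_tangent_eq_zero_of_norm_eq hDu (hη p hp) (connectedComponentIn_eq hp ▸ hnorm)
  rw [hDuη p hp] at hA htangent ⊢
  exact inner_cancellation_eq_zero_of_tangent (hη p hp).norm_eq_one hA htangent

end Cancellation

/-- Lemma 4.3 of the paper in `ℝⁿ`, with the Killing field a constant field `e`:
the boundary cancellation identity on a component `Γ` of `∂Ω` where `u` and `∂_η u` are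
constant.  `Du` and `H` are the continuous extensions to `cl Ω` of `∇u` and `Hess u`
(`u ∈ C²(cl Ω)`). -/
theorem boundary_cancellation_identity
    (n : ℕ) (Ω : Set (EuclideanSpace ℝ (Fin n)))
    (η : EuclideanSpace ℝ (Fin n) → EuclideanSpace ℝ (Fin n))
    (hΩ : IsCkDomainWithNormal 2 Ω η)
    (a : ℝ → ℝ) (ha : ContDiffOn ℝ 1 a (Ici 0))
    (hapos : ∀ t ≥ (0 : ℝ), 0 < a t) (hlam : ∀ t ≥ (0 : ℝ), 0 < lam1 a t)
    (u : EuclideanSpace ℝ (Fin n) → ℝ)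
    (hu2 : ContDiffOn ℝ 2 u Ω) (hucl : ContinuousOn u (closure Ω))
    (Du : EuclideanSpace ℝ (Fin n) → EuclideanSpace ℝ (Fin n))
    (hDu : ∀ x ∈ Ω, Du x = gradient u x) (hDuc : ContinuousOn Du (closure Ω))
    (H : EuclideanSpace ℝ (Fin n) → EuclideanSpace ℝ (Fin n) →L[ℝ] EuclideanSpace ℝ (Fin n))
    (hH : ∀ x ∈ Ω, H x = fderiv ℝ (gradient u) x) (hHc : ContinuousOn H (closure Ω))
    (p₀ : EuclideanSpace ℝ (Fin n)) (hp₀ : p₀ ∈ frontier Ω)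
    (Γ : Set (EuclideanSpace ℝ (Fin n))) (hΓ : Γ = connectedComponentIn (frontier Ω) p₀)
    (b c : ℝ) (hub : ∀ p ∈ Γ, u p = b) (hc : ∀ p ∈ Γ, ⟪Du p, η p⟫ = c)
    (e : EuclideanSpace ℝ (Fin n)) :
    ∀ p ∈ Γ,
      ⟪(⟪Du p, e⟫ / 2) • Aop a (Du p) ((2 : ℝ) • (H p) (Du p)) -
          ‖Du p‖ ^ 2 • Aop a (Du p) ((H p) e),
        η p⟫ = 0 := by
  subst hΓ
  have hopen : IsOpen Ω := hΩ.2.1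
  intro p hp
  exact boundary_cancellation_identity_general
    (fun q hq => hΩ.isInnerUnitNormalAt one_le_two (connectedComponentIn_subset _ _ hq))
    (hasFDerivUpToClosure_of_eq_gradient hopen (hu2.differentiableOn two_ne_zero) hucl hDu hDuc)
    (hasFDerivUpToClosure_of_eq_fderiv_gradient hopen hu2 hDu hDuc hH hHc)
    hub hc hp (inner_Aop_self a (Du p)) e
end
end
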